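/- The tensor product of two seminormal crystals is a seminormal crystal, and its string lengths are given by ε_i(b₁ ⊗ b₂) = max(ε_i(b₁), ε_i(b₂) − ⟨h_i, wt(b₁)⟩) and φ_i(b₁ ⊗ b₂) = max(φ_i(b₂), φ_i(b₁) + ⟨h_i, wt(b₂)⟩) for all i ∈ I and b₁ ∈ B₁, b₂ ∈ B₂. -/

import Mathlib

/-- Iterated application of a partial map `g : B → Option B`:
`iterOpt g k b` is `g^k b`, with `none` (i.e. `0`) absorbing. -/
def iterOpt {B : Type*} (g : B → Option B) : ℕ → B → Option B
  | 0, b => some b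
  | k + 1, b => (g b).bind (iterOpt g k)

/-- The generalized Cartan matrix conditions on a root datum given by simple
roots `α i ∈ P` and simple coroots `h i : P → ℤ`. -/
def IsGCM {I P : Type*} [AddCommGroup P] (α : I → P) (h : I → P →+ ℤ) : Prop :=
  (∀ i, h i (α i) = 2) ∧ (∀ i j, i ≠ j → h i (α j) ≤ 0) ∧
    (∀ i j, i ≠ j → (h i (α j) = 0 ↔ h j (α i) = 0))

/-- A seminormal crystal with index set `I`, over the root datum `(P, α, h)`,
with underlying set `B`.  The raising/lowering operators take values in
`Option B`, with `none` playing the role of `0`; `eps i b` and `phi i b` are the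
(finite) string lengths `max {k : e_i^k b ≠ 0}` and `max {k : f_i^k b ≠ 0}`. -/
structure SeminormalCrystal (I : Type*) {P : Type*} [AddCommGroup P]
    (α : I → P) (h : I → P →+ ℤ) (B : Type*) where
  e : I → B → Option B
  f : I → B → Option B
  wt : B → P
  ef_iff : ∀ (i : I) (b b' : B), e i b = some b' ↔ f i b' = some b
  wt_e : ∀ (i : I) (b b' : B), e i b = some b' → wt b' = wt b + α i
  eps : I → B → ℕ
  phi : I → B → ℕ
  eps_spec : ∀ (i : I) (b : B) (k : ℕ), (iterOpt (e i) k b).isSome ↔ k ≤ eps i b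
  phi_spec : ∀ (i : I) (b : B) (k : ℕ), (iterOpt (f i) k b).isSome ↔ k ≤ phi i b
  phi_sub_eps : ∀ (i : I) (b : B), (phi i b : ℤ) - (eps i b : ℤ) = h i (wt b)

/-- The group structure on `AddAut A` under composition (the former Mathlib
instance `AddAut.group`). -/
instance addAutGroup (A : Type*) [Add A] : Group (AddAut A) where
  mul g h := AddEquiv.trans h g
  one := AddEquiv.refl _
  inv := AddEquiv.symm
  mul_assoc _ _ _ := rfl
  one_mul _ := rfl
  mul_one _ := rfl
  inv_mul_cancel := AddEquiv.self_trans_symm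

/-- The simple reflection `s_i : λ ↦ λ - ⟨h_i, λ⟩ α_i` as an automorphism of
the weight lattice `P`. -/
def sAut {I P : Type*} [AddCommGroup P] (α : I → P) (h : I → P →+ ℤ)
    (hd : ∀ i, h i (α i) = 2) (i : I) : AddAut P where
  toFun x := x - h i x • α i
  invFun x := x - h i x • α i
  left_inv x := by
    simp only [map_sub, map_zsmul, hd i, smul_eq_mul]
    have : h i x - h i x * 2 = -(h i x) := by ring
    rw [this, neg_smul, sub_neg_eq_add, sub_add_cancel]
  right_inv x := by
    simp only [map_sub, map_zsmul, hd i, smul_eq_mul]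
    have : h i x - h i x * 2 = -(h i x) := by ring
    rw [this, neg_smul, sub_neg_eq_add, sub_add_cancel]
  map_add' x y := by
    simp only [map_add, add_smul]
    abel

/-- The Weyl group, the subgroup of `Aut(P)` generated by the simple
reflections. -/
def weylGroup {I P : Type*} [AddCommGroup P] (α : I → P) (h : I → P →+ ℤ)
    (hd : ∀ i, h i (α i) = 2) : Subgroup (AddAut P) :=
  Subgroup.closure (Set.range (sAut α h hd))

/-- The simple reflection `s_i`, as an element of the Weyl group. -/
def sW {I P : Type*} [AddCommGroup P] (α : I → P) (h : I → P →+ ℤ)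
    (hd : ∀ i, h i (α i) = 2) (i : I) : weylGroup α h hd :=
  ⟨sAut α h hd i, Subgroup.subset_closure ⟨i, rfl⟩⟩

/-- The Weyl group action operator `S_i` on a seminormal crystal:
`S_i b = f_i^{⟨h_i, wt b⟩} b` if `⟨h_i, wt b⟩ ≥ 0` and
`S_i b = e_i^{-⟨h_i, wt b⟩} b` otherwise (with junk value `b` if the result
would be `0`, which never happens). -/
def Sop {I P B : Type*} [AddCommGroup P] {α : I → P} {h : I → P →+ ℤ}
    (C : SeminormalCrystal I α h B) (i : I) (b : B) : B :=
  if 0 ≤ h i (C.wt b) then (iterOpt (C.f i) (h i (C.wt b)).toNat b).getD b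
  else (iterOpt (C.e i) (-(h i (C.wt b))).toNat b).getD b

/-- A seminormal crystal is regular if there is an action of the Weyl group on
`B` under which each simple reflection `s_i` acts by `S_i`. -/
def IsRegularCrystal {I P B : Type*} [AddCommGroup P] {α : I → P} {h : I → P →+ ℤ}
    (C : SeminormalCrystal I α h B) (hd : ∀ i, h i (α i) = 2) : Prop :=
  ∃ ρ : weylGroup α h hd →* Equiv.Perm B,
    ∀ (i : I) (b : B), ρ (sW α h hd i) b = Sop C i b

/-- `bw : W → B` witnesses that `b` is an extremal element of the seminormal
crystal `C`. -/
def IsExtremalFamily {I P B : Type*} [AddCommGroup P] {α : I → P} {h : I → P →+ ℤ}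
    (C : SeminormalCrystal I α h B) (hd : ∀ i, h i (α i) = 2)
    (b : B) (bw : weylGroup α h hd → B) : Prop :=
  bw 1 = b ∧
    ∀ (w : weylGroup α h hd) (i : I),
      (0 ≤ h i ((w : AddAut P) (C.wt b)) →
        C.e i (bw w) = none ∧
          iterOpt (C.f i) (h i ((w : AddAut P) (C.wt b))).toNat (bw w) =
            some (bw (sW α h hd i * w))) ∧
      (h i ((w : AddAut P) (C.wt b)) ≤ 0 →
        C.f i (bw w) = none ∧
          iterOpt (C.e i) (-(h i ((w : AddAut P) (C.wt b)))).toNat (bw w) =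
            some (bw (sW α h hd i * w)))

/-- An element of a seminormal crystal is extremal if it admits an extremal
family of elements indexed by the Weyl group. -/
def IsExtremal {I P B : Type*} [AddCommGroup P] {α : I → P} {h : I → P →+ ℤ}
    (C : SeminormalCrystal I α h B) (hd : ∀ i, h i (α i) = 2) (b : B) : Prop :=
  ∃ bw : weylGroup α h hd → B, IsExtremalFamily C hd b bw

/-- A finite regular seminormal crystal is simple if there is a weight
`lam ∈ P` such that every extremal element has weight in the Weyl group orbit
of `lam`, and exactly one element of `B` has weight `lam`. -/
def IsSimpleCrystal {I P B : Type*} [AddCommGroup P] {α : I → P} {h : I → P →+ ℤ}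
    (C : SeminormalCrystal I α h B) (hd : ∀ i, h i (α i) = 2) : Prop :=
  ∃ lam : P,
    (∀ b : B, IsExtremal C hd b →
      ∃ w : weylGroup α h hd, C.wt b = (w : AddAut P) lam) ∧
    (∃! b : B, C.wt b = lam)

/-- The (symmetric) adjacency relation of the crystal graph: `b` and `b'` are
joined by an edge when `b' = f_i b` or `b = f_i b'` for some `i`. -/
def CrystalRel {I P B : Type*} [AddCommGroup P] {α : I → P} {h : I → P →+ ℤ}
    (C : SeminormalCrystal I α h B) (b b' : B) : Prop :=
  ∃ i : I, C.f i b = some b' ∨ C.f i b' = some b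

/-- The raising operator of the tensor product `B₁ ⊗ B₂`:
`e_i (b₁ ⊗ b₂) = (e_i b₁) ⊗ b₂` if `φ_i(b₁) ≥ ε_i(b₂)`, and `b₁ ⊗ (e_i b₂)`
otherwise (with `x ⊗ 0 = 0 ⊗ x = 0`). -/
def tensorE {I P B₁ B₂ : Type*} [AddCommGroup P] {α : I → P} {h : I → P →+ ℤ}
    (C₁ : SeminormalCrystal I α h B₁) (C₂ : SeminormalCrystal I α h B₂)
    (i : I) (p : B₁ × B₂) : Option (B₁ × B₂) :=
  if C₂.eps i p.2 ≤ C₁.phi i p.1 then (C₁.e i p.1).map fun b => (b, p.2)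
  else (C₂.e i p.2).map fun b => (p.1, b)

/-- The lowering operator of the tensor product `B₁ ⊗ B₂`:
`f_i (b₁ ⊗ b₂) = (f_i b₁) ⊗ b₂` if `φ_i(b₁) > ε_i(b₂)`, and `b₁ ⊗ (f_i b₂)`
otherwise (with `x ⊗ 0 = 0 ⊗ x = 0`). -/
def tensorF {I P B₁ B₂ : Type*} [AddCommGroup P] {α : I → P} {h : I → P →+ ℤ}
    (C₁ : SeminormalCrystal I α h B₁) (C₂ : SeminormalCrystal I α h B₂)
    (i : I) (p : B₁ × B₂) : Option (B₁ × B₂) :=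
  if C₂.eps i p.2 < C₁.phi i p.1 then (C₁.f i p.1).map fun b => (b, p.2)
  else (C₂.f i p.2).map fun b => (p.1, b)

theorem iterOpt_isSome_of_step {B : Type*} (g : B → Option B) (n : B → ℕ)
    (h0 : ∀ b, g b = none → n b = 0)
    (h1 : ∀ b b', g b = some b' → n b = n b' + 1) (k : ℕ) (b : B) :
    (iterOpt g k b).isSome ↔ k ≤ n b := by
  induction k generalizing b with
  | zero => simp [iterOpt]
  | succ k ih =>
    cases hb : g b with
    | none => simp [iterOpt, hb, h0 b hb]
    | some b' => simp [iterOpt, hb, h1 b b' hb, ih]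

theorem step_none_of_spec {B : Type*} (g : B → Option B) (n : B → ℕ)
    (H : ∀ b k, (iterOpt g k b).isSome ↔ k ≤ n b) (b : B) (hb : g b = none) : n b = 0 := by
  have := H b 1
  simp [iterOpt, hb] at this
  omega

theorem step_some_of_spec {B : Type*} (g : B → Option B) (n : B → ℕ)
    (H : ∀ b k, (iterOpt g k b).isSome ↔ k ≤ n b) (b b' : B) (hb : g b = some b') :
    n b = n b' + 1 := by
  have key : ∀ k, k + 1 ≤ n b ↔ k ≤ n b' := fun k => by
    rw [← H b, ← H b']
    simp [iterOpt, hb]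
  have h1 := key (n b')
  have h2 := key (n b' + 1)
  omega

/-- The tensor product of two seminormal crystals is a
seminormal crystal, with `wt (b₁ ⊗ b₂) = wt b₁ + wt b₂` and string lengths
`ε_i (b₁ ⊗ b₂) = max (ε_i b₁) (ε_i b₂ - ⟨h_i, wt b₁⟩)` and
`φ_i (b₁ ⊗ b₂) = max (φ_i b₂) (φ_i b₁ + ⟨h_i, wt b₂⟩)`. -/
theorem tensor_is_seminormal_crystal
    {I P B₁ B₂ : Type*} [Fintype I] [AddCommGroup P] [Module.Free ℤ P]
    [Module.Finite ℤ P]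
    (α : I → P) (h : I → P →+ ℤ) (hGCM : IsGCM α h)
    (C₁ : SeminormalCrystal I α h B₁) (C₂ : SeminormalCrystal I α h B₂) :
    ∃ C : SeminormalCrystal I α h (B₁ × B₂),
      C.e = tensorE C₁ C₂ ∧ C.f = tensorF C₁ C₂ ∧
      (∀ p : B₁ × B₂, C.wt p = C₁.wt p.1 + C₂.wt p.2) ∧
      (∀ (i : I) (p : B₁ × B₂),
        (C.eps i p : ℤ) =
          max (C₁.eps i p.1 : ℤ) ((C₂.eps i p.2 : ℤ) - h i (C₁.wt p.1))) ∧
      (∀ (i : I) (p : B₁ × B₂),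
        (C.phi i p : ℤ) =
          max (C₂.phi i p.2 : ℤ) ((C₁.phi i p.1 : ℤ) + h i (C₂.wt p.2))) := by
  have e0₁ := fun i => step_none_of_spec _ _ (C₁.eps_spec i)
  have e0₂ := fun i => step_none_of_spec _ _ (C₂.eps_spec i)
  have f0₁ := fun i => step_none_of_spec _ _ (C₁.phi_spec i)
  have f0₂ := fun i => step_none_of_spec _ _ (C₂.phi_spec i)
  have e1₁ := fun i => step_some_of_spec _ _ (C₁.eps_spec i)
  have e1₂ := fun i => step_some_of_spec _ _ (C₂.eps_spec i)
  have f1₁ := fun i => step_some_of_spec _ _ (C₁.phi_spec i)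
  have f1₂ := fun i => step_some_of_spec _ _ (C₂.phi_spec i)
  refine ⟨{ e := tensorE C₁ C₂
            f := tensorF C₁ C₂
            wt := fun p => C₁.wt p.1 + C₂.wt p.2
            eps := fun i p => C₁.eps i p.1 + (C₂.eps i p.2 - C₁.phi i p.1)
            phi := fun i p => C₂.phi i p.2 + (C₁.phi i p.1 - C₂.eps i p.2)
            ef_iff := ?_
            wt_e := ?_
            eps_spec := ?_
            phi_spec := ?_
            phi_sub_eps := ?_ }, rfl, rfl, fun _ => rfl, ?_, ?_⟩
  · rintro i ⟨a, b⟩ ⟨a', b'⟩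
    simp only [tensorE, tensorF]
    constructor
    · intro H
      split_ifs at H with hc
      · simp only [Option.map_eq_some_iff, Prod.mk.injEq] at H
        obtain ⟨x, hx, rfl, rfl⟩ := H
        have hf := (C₁.ef_iff _ _ _).1 hx
        have := f1₁ _ _ _ hf
        rw [if_pos (by omega), hf]; rfl
      · simp only [Option.map_eq_some_iff, Prod.mk.injEq] at H
        obtain ⟨x, hx, rfl, rfl⟩ := H
        have hf := (C₂.ef_iff _ _ _).1 hx
        have := e1₂ _ _ _ hx
        rw [if_neg (by omega), hf]; rfl
    · intro H
      split_ifs at H with hc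
      · simp only [Option.map_eq_some_iff, Prod.mk.injEq] at H
        obtain ⟨x, hx, rfl, rfl⟩ := H
        have hf := (C₁.ef_iff _ _ _).2 hx
        have := f1₁ _ _ _ hx
        rw [if_pos (by omega), hf]; rfl
      · simp only [Option.map_eq_some_iff, Prod.mk.injEq] at H
        obtain ⟨x, hx, rfl, rfl⟩ := H
        have hf := (C₂.ef_iff _ _ _).2 hx
        have := e1₂ _ _ _ hf
        rw [if_neg (by omega), hf]; rfl
  · rintro i ⟨a, b⟩ ⟨a', b'⟩ H
    simp only [tensorE] at H ⊢
    split_ifs at H with hc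
    · simp only [Option.map_eq_some_iff, Prod.mk.injEq] at H
      obtain ⟨x, hx, rfl, rfl⟩ := H
      rw [C₁.wt_e _ _ _ hx]; abel
    · simp only [Option.map_eq_some_iff, Prod.mk.injEq] at H
      obtain ⟨x, hx, rfl, rfl⟩ := H
      rw [C₂.wt_e _ _ _ hx]; abel
  · intro i p k
    refine iterOpt_isSome_of_step (tensorE C₁ C₂ i)
      (fun p => C₁.eps i p.1 + (C₂.eps i p.2 - C₁.phi i p.1)) ?_ ?_ k p
    · rintro ⟨a, b⟩ H
      simp only [tensorE] at H ⊢
      split_ifs at H with hc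
      · have := e0₁ _ _ (Option.map_eq_none_iff.1 H)
        omega
      · have := e0₂ _ _ (Option.map_eq_none_iff.1 H)
        omega
    · rintro ⟨a, b⟩ ⟨a', b'⟩ H
      simp only [tensorE] at H ⊢
      split_ifs at H with hc
      · simp only [Option.map_eq_some_iff, Prod.mk.injEq] at H
        obtain ⟨x, hx, rfl, rfl⟩ := H
        have := e1₁ _ _ _ hx
        have := f1₁ _ _ _ ((C₁.ef_iff _ _ _).1 hx)
        omega
      · simp only [Option.map_eq_some_iff, Prod.mk.injEq] at H
        obtain ⟨x, hx, rfl, rfl⟩ := H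
        have := e1₂ _ _ _ hx
        omega
  · intro i p k
    refine iterOpt_isSome_of_step (tensorF C₁ C₂ i)
      (fun p => C₂.phi i p.2 + (C₁.phi i p.1 - C₂.eps i p.2)) ?_ ?_ k p
    · rintro ⟨a, b⟩ H
      simp only [tensorF] at H ⊢
      split_ifs at H with hc
      · have := f0₁ _ _ (Option.map_eq_none_iff.1 H)
        omega
      · have := f0₂ _ _ (Option.map_eq_none_iff.1 H)
        omega
    · rintro ⟨a, b⟩ ⟨a', b'⟩ H
      simp only [tensorF] at H ⊢
      split_ifs at H with hc
      · simp only [Option.map_eq_some_iff, Prod.mk.injEq] at H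
        obtain ⟨x, hx, rfl, rfl⟩ := H
        have := f1₁ _ _ _ hx
        omega
      · simp only [Option.map_eq_some_iff, Prod.mk.injEq] at H
        obtain ⟨x, hx, rfl, rfl⟩ := H
        have := f1₂ _ _ _ hx
        have := e1₂ _ _ _ ((C₂.ef_iff _ _ _).2 hx)
        omega
  · intro i p
    have h1 := C₁.phi_sub_eps i p.1
    have h2 := C₂.phi_sub_eps i p.2
    simp only [map_add]
    omega
  · intro i p
    have h1 := C₁.phi_sub_eps i p.1
    simp only
    omega
  · intro i p
    have h2 := C₂.phi_sub_eps i p.2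
    simp only
    omega
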